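/- Let R ⊆ ℝⁿ be a convex set, let g be twice continuously differentiable on an open set containing R, and let ε > 0. If u, v ∈ R and there are p ∈ ℝⁿ and q ∈ ℝ such that |p·z + q − g(z)| ≤ ε for every z on the segment [u, v], then ‖v − u‖₂² · Ψ(g, u, v)² ≤ 16 ε. -/

import Mathlib

open scoped RealInnerProductSpace

noncomputable def hess {n : ℕ} (g : EuclideanSpace ℝ (Fin n) → ℝ)
    (z : EuclideanSpace ℝ (Fin n)) : Matrix (Fin n) (Fin n) ℝ :=
  fun i j => iteratedFDeriv ℝ 2 g z ![EuclideanSpace.single i 1, EuclideanSpace.single j 1]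

noncomputable def lamMax {n : ℕ} (A : Matrix (Fin n) (Fin n) ℝ) : ℝ := sSup (spectrum ℝ A)

noncomputable def lamMin {n : ℕ} (A : Matrix (Fin n) (Fin n) ℝ) : ℝ := sInf (spectrum ℝ A)

noncomputable def Psi {n : ℕ} (g : EuclideanSpace ℝ (Fin n) → ℝ)
    (x y : EuclideanSpace ℝ (Fin n)) : ℝ :=
  Real.sqrt (sInf ((fun α : ℝ =>
      max 0 (Real.sign (lamMax (hess g ((1 - α) • x + α • y)) *
          lamMin (hess g ((1 - α) • x + α • y))) *
        min |lamMax (hess g ((1 - α) • x + α • y))|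
            |lamMin (hess g ((1 - α) • x + α • y))|)) '' Set.Icc (0 : ℝ) 1))

/-!
The second difference `g u + g v - 2 * g (midpoint ℝ u v)` is a quarter of the second derivative of
`g` in direction `v - u` at some point `z` of the segment. The quadratic form of a definite matrix
is, in absolute value, at least the smallest absolute value of an eigenvalue times the squared norm,
so the absolute value of the second difference is at least `‖v - u‖² Ψ² / 4`. An affine function
has zero second difference, so approximation within `ε` at `u`, `v` and the midpoint bounds that
absolute value by `ε + ε + 2 ε`.
-/

open Set Matrix
open scoped Topology

section SecondDifference

theorem exists_second_difference_eq {f f' f'' : ℝ → ℝ} {a b : ℝ} (hab : a < b)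
    (hf : ContinuousOn f (Icc a b)) (hf' : ∀ t ∈ Ioo a b, HasDerivAt f (f' t) t)
    (hf'' : ∀ t ∈ Ioo a b, HasDerivAt f' (f'' t) t) :
    ∃ ξ ∈ Ioo a b, f a + f b - 2 * f ((a + b) / 2) = f'' ξ * ((b - a) / 2) ^ 2 := by
  obtain ⟨δ, rfl⟩ : ∃ δ, b = a + 2 * δ := ⟨(b - a) / 2, by ring⟩
  have hδ : 0 < δ := by linarith
  -- The second difference is the increment of `t ↦ f (t + δ) - f t` over `[a, a + δ]`.
  have increment_deriv : ∀ t ∈ Ioo a (a + δ),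
      HasDerivAt (fun t ↦ f (t + δ) - f t) (f' (t + δ) - f' t) t := fun t ht ↦
    ((hf' (t + δ) ⟨by linarith [ht.1], by linarith [ht.2]⟩).comp_add_const t δ).sub
      (hf' t ⟨ht.1, by linarith [ht.2]⟩)
  have increment_cont : ContinuousOn (fun t ↦ f (t + δ) - f t) (Icc a (a + δ)) :=
    (hf.comp (by fun_prop) fun t ht ↦ ⟨by linarith [ht.1], by linarith [ht.2]⟩).sub
      (hf.mono (Icc_subset_Icc_right (by linarith)))
  obtain ⟨η, hη, slope_increment⟩ := exists_hasDerivAt_eq_slope _ _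
    (by linarith : a < a + δ) increment_cont increment_deriv
  have hsub : Icc η (η + δ) ⊆ Ioo a (a + 2 * δ) := fun t ht ↦
    ⟨by linarith [ht.1, hη.1], by linarith [ht.2, hη.2]⟩
  obtain ⟨ξ, hξ, slope_deriv⟩ := exists_hasDerivAt_eq_slope f' f''
    (by linarith : η < η + δ) (fun t ht ↦ (hf'' t (hsub ht)).continuousAt.continuousWithinAt)
    (fun t ht ↦ hf'' t (hsub (Ioo_subset_Icc_self ht)))
  refine ⟨ξ, hsub (Ioo_subset_Icc_self hξ), ?_⟩
  rw [add_sub_cancel_left, eq_div_iff hδ.ne'] at slope_increment slope_deriv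
  rw [show (a + (a + 2 * δ)) / 2 = a + δ by ring, show (a + 2 * δ - a) / 2 = δ by ring]
  rw [show a + δ + δ = a + 2 * δ by ring] at slope_increment
  linear_combination -slope_increment - δ * slope_deriv

theorem exists_second_difference_eq_fderiv_fderiv {E : Type*} [NormedAddCommGroup E]
    [NormedSpace ℝ E] {g : E → ℝ} {u v : E} (hg : ∀ z ∈ segment ℝ u v, DifferentiableAt ℝ g z)
    (hg' : ∀ z ∈ segment ℝ u v, DifferentiableAt ℝ (fderiv ℝ g) z) :
    ∃ z ∈ segment ℝ u v,
      g u + g v - 2 * g (midpoint ℝ u v) = fderiv ℝ (fderiv ℝ g) z (v - u) (v - u) / 4 := by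
  set line : ℝ →ᵃ[ℝ] E := AffineMap.lineMap u v with line_def
  have line_mem : ∀ t ∈ Icc (0 : ℝ) 1, line t ∈ segment ℝ u v := fun t ht ↦
    segment_eq_image_lineMap ℝ u v ▸ mem_image_of_mem _ ht
  have line_deriv (t : ℝ) : HasDerivAt line (v - u) t := AffineMap.hasDerivAt_lineMap
  have deriv_one : ∀ t ∈ Icc (0 : ℝ) 1,
      HasDerivAt (fun t ↦ g (line t)) (fderiv ℝ g (line t) (v - u)) t := fun t ht ↦
    (hg _ (line_mem t ht)).hasFDerivAt.comp_hasDerivAt t (line_deriv t)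
  have deriv_two : ∀ t ∈ Icc (0 : ℝ) 1, HasDerivAt (fun t ↦ fderiv ℝ g (line t) (v - u))
      (fderiv ℝ (fderiv ℝ g) (line t) (v - u) (v - u)) t := fun t ht ↦ by
    simpa using ((hg' _ (line_mem t ht)).hasFDerivAt.comp_hasDerivAt t (line_deriv t)).clm_apply
      (hasDerivAt_const t (v - u))
  obtain ⟨ξ, hξ, second_difference⟩ := exists_second_difference_eq zero_lt_one
    (fun t ht ↦ (deriv_one t ht).continuousAt.continuousWithinAt)
    (fun t ht ↦ deriv_one t (Ioo_subset_Icc_self ht))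
    (fun t ht ↦ deriv_two t (Ioo_subset_Icc_self ht))
  refine ⟨line ξ, line_mem ξ (Ioo_subset_Icc_self hξ), ?_⟩
  rw [zero_add, line_def, AffineMap.lineMap_apply_zero, AffineMap.lineMap_apply_one,
    lineMap_one_half] at second_difference
  linear_combination second_difference

end SecondDifference

section ExtremeEigenvalues

open scoped MatrixOrder ComplexOrder

theorem star_dotProduct_mulVec_mono {ι 𝕜 : Type*} [Fintype ι] [RCLike 𝕜] {A B : Matrix ι ι 𝕜}
    (h : A ≤ B) (d : ι → 𝕜) : star d ⬝ᵥ A *ᵥ d ≤ star d ⬝ᵥ B *ᵥ d := by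
  have hnonneg := (Matrix.le_iff.mp h).dotProduct_mulVec_nonneg d
  rwa [sub_mulVec, dotProduct_sub, sub_nonneg] at hnonneg

variable {n : ℕ}

theorem lamMin_le_lamMax (A : Matrix (Fin n) (Fin n) ℝ) : lamMin A ≤ lamMax A :=
  Real.sInf_le_sSup _ A.finite_real_spectrum.bddBelow A.finite_real_spectrum.bddAbove

variable {A : Matrix (Fin n) (Fin n) ℝ}

theorem lamMin_mul_dotProduct_self_le (hA : A.IsHermitian) (d : Fin n → ℝ) :
    lamMin A * (d ⬝ᵥ d) ≤ d ⬝ᵥ A *ᵥ d := by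
  have hle : algebraMap ℝ _ (lamMin A) ≤ A :=
    (algebraMap_le_iff_le_spectrum (ha := hA.isSelfAdjoint)).mpr fun _ hx ↦
      csInf_le A.finite_real_spectrum.bddBelow hx
  simpa [Algebra.algebraMap_eq_smul_one, smul_mulVec] using star_dotProduct_mulVec_mono hle d

theorem dotProduct_mulVec_le_lamMax_mul (hA : A.IsHermitian) (d : Fin n → ℝ) :
    d ⬝ᵥ A *ᵥ d ≤ lamMax A * (d ⬝ᵥ d) := by
  have hle : A ≤ algebraMap ℝ _ (lamMax A) :=
    (le_algebraMap_iff_spectrum_le (ha := hA.isSelfAdjoint)).mpr fun _ hx ↦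
      le_csSup A.finite_real_spectrum.bddAbove hx
  simpa [Algebra.algebraMap_eq_smul_one, smul_mulVec] using star_dotProduct_mulVec_mono hle d

end ExtremeEigenvalues

section Definiteness

/-- The quantity whose infimum along a segment is `Psi ^ 2`: the least absolute value of an
eigenvalue if the symmetric matrix `A` is positive or negative definite, and `0` otherwise. It is
written exactly as in `Psi`. -/
noncomputable def definiteness {n : ℕ} (A : Matrix (Fin n) (Fin n) ℝ) : ℝ :=
  max 0 (Real.sign (lamMax A * lamMin A) * min |lamMax A| |lamMin A|)

theorem max_zero_sign_mul_min_abs {a b : ℝ} (hab : a ≤ b) :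
    max 0 (Real.sign (b * a) * min |b| |a|) = max 0 (max a (-b)) := by
  rcases lt_or_ge 0 a with ha | ha
  · have hb : 0 < b := ha.trans_le hab
    rw [Real.sign_of_pos (mul_pos hb ha), one_mul, abs_of_pos ha, abs_of_pos hb,
      min_eq_right hab, max_eq_left (by linarith : -b ≤ a)]
  rcases lt_or_ge b 0 with hb | hb
  · have ha : a < 0 := hab.trans_lt hb
    rw [Real.sign_of_pos (mul_pos_of_neg_of_neg hb ha), one_mul, abs_of_neg ha, abs_of_neg hb,
      min_eq_left (by linarith), max_eq_right (by linarith : a ≤ -b)]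
  · have hsign : Real.sign (b * a) ≤ 0 := by
      rcases (mul_nonpos_of_nonneg_of_nonpos hb ha).eq_or_lt with h | h
      · rw [h, Real.sign_zero]
      · rw [Real.sign_of_neg h]
        exact neg_one_lt_zero.le
    rw [max_eq_left (mul_nonpos_of_nonpos_of_nonneg hsign (by positivity)),
      max_eq_left (max_le ha (neg_nonpos.mpr hb))]

variable {n : ℕ}

theorem definiteness_eq_max (A : Matrix (Fin n) (Fin n) ℝ) :
    definiteness A = max 0 (max (lamMin A) (-lamMax A)) :=
  max_zero_sign_mul_min_abs (lamMin_le_lamMax A)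

theorem definiteness_mul_dotProduct_self_le {A : Matrix (Fin n) (Fin n) ℝ} (hA : A.IsHermitian)
    (d : Fin n → ℝ) : definiteness A * (d ⬝ᵥ d) ≤ |d ⬝ᵥ A *ᵥ d| := by
  have hd : 0 ≤ d ⬝ᵥ d := by simpa using dotProduct_star_self_nonneg d
  rw [definiteness_eq_max, max_mul_of_nonneg _ _ hd, max_mul_of_nonneg _ _ hd, zero_mul, neg_mul]
  refine max_le (abs_nonneg _) (max_le ?_ ?_)
  · exact (lamMin_mul_dotProduct_self_le hA d).trans (le_abs_self _)
  · exact (neg_le_neg (dotProduct_mulVec_le_lamMax_mul hA d)).trans (neg_le_abs _)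

end Definiteness

section Hessian

variable {n : ℕ}

theorem dotProduct_hess_mulVec (g : EuclideanSpace ℝ (Fin n) → ℝ)
    (z d e : EuclideanSpace ℝ (Fin n)) :
    d.ofLp ⬝ᵥ hess g z *ᵥ e.ofLp = fderiv ℝ (fderiv ℝ g) z d e := by
  have hess_eq_toMatrix : hess g z = LinearMap.BilinForm.toMatrix
      (EuclideanSpace.basisFun (Fin n) ℝ).toBasis (fderiv ℝ (fderiv ℝ g) z).toBilinForm := by
    ext i j
    simp [hess, iteratedFDeriv_two_apply, LinearMap.BilinForm.toMatrix_apply]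
  rw [hess_eq_toMatrix]
  exact (LinearMap.BilinForm.apply_eq_dotProduct_toMatrix_mulVec
    (EuclideanSpace.basisFun (Fin n) ℝ).toBasis (fderiv ℝ (fderiv ℝ g) z).toBilinForm d e).symm

variable {g : EuclideanSpace ℝ (Fin n) → ℝ} {u v z : EuclideanSpace ℝ (Fin n)}

theorem isHermitian_hess (hg : ∀ᶠ w in 𝓝 z, DifferentiableAt ℝ g w)
    (hg' : DifferentiableAt ℝ (fderiv ℝ g) z) : (hess g z).IsHermitian := by
  ext i j
  simpa [hess, iteratedFDeriv_two_apply] using second_derivative_symmetric_of_eventually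
    (hg.mono fun _ hw ↦ hw.hasFDerivAt) hg'.hasFDerivAt _ _

theorem Psi_sq_le_definiteness_hess (hz : z ∈ segment ℝ u v) :
    Psi g u v ^ 2 ≤ definiteness (hess g z) := by
  rw [segment_eq_image] at hz
  obtain ⟨α, hα, rfl⟩ := hz
  rw [Psi, Real.sq_sqrt]
  · refine csInf_le ⟨0, ?_⟩ ⟨α, hα, rfl⟩
    rintro _ ⟨t, _, rfl⟩
    exact le_max_left _ _
  · apply Real.sInf_nonneg
    rintro _ ⟨t, _, rfl⟩
    exact le_max_left _ _

theorem sq_norm_mul_Psi_sq_le_second_difference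
    (hg : ∀ z ∈ segment ℝ u v, ∀ᶠ w in 𝓝 z, DifferentiableAt ℝ g w)
    (hg' : ∀ z ∈ segment ℝ u v, DifferentiableAt ℝ (fderiv ℝ g) z) :
    ‖v - u‖ ^ 2 * Psi g u v ^ 2 ≤ 4 * |g u + g v - 2 * g (midpoint ℝ u v)| := by
  obtain ⟨z, hz, second_difference⟩ :=
    exists_second_difference_eq_fderiv_fderiv (fun z hz ↦ (hg z hz).self_of_nhds) hg'
  calc ‖v - u‖ ^ 2 * Psi g u v ^ 2
      ≤ ‖v - u‖ ^ 2 * definiteness (hess g z) := by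
        gcongr
        exact Psi_sq_le_definiteness_hess hz
    _ = definiteness (hess g z) * ((v - u).ofLp ⬝ᵥ (v - u).ofLp) := by
        rw [mul_comm, EuclideanSpace.real_norm_sq_eq]
        simp only [dotProduct, pow_two]
    _ ≤ |fderiv ℝ (fderiv ℝ g) z (v - u) (v - u)| := by
        rw [← dotProduct_hess_mulVec]
        exact definiteness_mul_dotProduct_self_le (isHermitian_hess (hg z hz) (hg' z hz)) _
    _ = 4 * |g u + g v - 2 * g (midpoint ℝ u v)| := by
        rw [second_difference, abs_div, abs_of_pos (four_pos (α := ℝ))]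
        ring

end Hessian

theorem abs_second_difference_le_of_abs_affine_sub_le {E : Type*} [NormedAddCommGroup E]
    [InnerProductSpace ℝ E] {g : E → ℝ} {u v p : E} {q ε : ℝ} (hu : |⟪p, u⟫ + q - g u| ≤ ε)
    (hv : |⟪p, v⟫ + q - g v| ≤ ε)
    (hmid : |⟪p, midpoint ℝ u v⟫ + q - g (midpoint ℝ u v)| ≤ ε) :
    |g u + g v - 2 * g (midpoint ℝ u v)| ≤ 4 * ε := by
  have inner_midpoint : 2 * ⟪p, midpoint ℝ u v⟫ = ⟪p, u⟫ + ⟪p, v⟫ := by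
    rw [midpoint_eq_smul_add, inner_smul_right, inner_add_right, invOf_eq_inv]
    ring
  rw [abs_le] at hu hv hmid ⊢
  constructor <;> linarith

theorem sq_norm_mul_psi_sq_le_general {n : ℕ} {U : Set (EuclideanSpace ℝ (Fin n))}
    (hU : IsOpen U) {g : EuclideanSpace ℝ (Fin n) → ℝ} (hg : DifferentiableOn ℝ g U)
    (hg' : DifferentiableOn ℝ (fderiv ℝ g) U) {u v : EuclideanSpace ℝ (Fin n)}
    (huv : segment ℝ u v ⊆ U) {p : EuclideanSpace ℝ (Fin n)} {q ε : ℝ}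
    (hu : |⟪p, u⟫ + q - g u| ≤ ε) (hv : |⟪p, v⟫ + q - g v| ≤ ε)
    (hmid : |⟪p, midpoint ℝ u v⟫ + q - g (midpoint ℝ u v)| ≤ ε) :
    ‖v - u‖ ^ 2 * Psi g u v ^ 2 ≤ 16 * ε := by
  have nhds_mem : ∀ z ∈ segment ℝ u v, U ∈ 𝓝 z := fun z hz ↦ hU.mem_nhds (huv hz)
  have lower := sq_norm_mul_Psi_sq_le_second_difference
    (fun z hz ↦ hg.eventually_differentiableAt (nhds_mem z hz))
    (fun z hz ↦ hg'.differentiableAt (nhds_mem z hz))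
  have upper := abs_second_difference_le_of_abs_affine_sub_le hu hv hmid
  linarith

/-- If an affine function `z ↦ p·z + q` is uniformly within `ε` of a C² function `g`
on the segment `[u, v]`, then `‖v − u‖₂² · Ψ(g, u, v)² ≤ 16 ε`. -/
theorem sq_norm_mul_psi_sq_le {n : ℕ} (R : Set (EuclideanSpace ℝ (Fin n))) (hR : Convex ℝ R)
    (U : Set (EuclideanSpace ℝ (Fin n))) (hU : IsOpen U) (hRU : R ⊆ U)
    (g : EuclideanSpace ℝ (Fin n) → ℝ) (hg : ContDiffOn ℝ 2 g U)
    (ε : ℝ) (hε : 0 < ε)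
    (u v : EuclideanSpace ℝ (Fin n)) (hu : u ∈ R) (hv : v ∈ R)
    (p : EuclideanSpace ℝ (Fin n)) (q : ℝ)
    (happrox : ∀ α ∈ Set.Icc (0 : ℝ) 1,
      |⟪p, (1 - α) • u + α • v⟫ + q - g ((1 - α) • u + α • v)| ≤ ε) :
    ‖v - u‖ ^ 2 * Psi g u v ^ 2 ≤ 16 * ε := by
  have hmid : |⟪p, midpoint ℝ u v⟫ + q - g (midpoint ℝ u v)| ≤ ε := by
    rw [← lineMap_one_half, AffineMap.lineMap_apply_module]
    exact happrox (1 / 2) (by norm_num)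
  exact sq_norm_mul_psi_sq_le_general hU (hg.differentiableOn two_ne_zero)
    ((hg.fderiv_of_isOpen hU one_add_one_eq_two.le).differentiableOn one_ne_zero)
    ((hR.segment_subset hu hv).trans hRU) (by simpa using happrox 0 (by simp))
    (by simpa using happrox 1 (by simp)) hmid
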